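/- arXiv:math/0207042 — 2 statements merged into one kernel-verified Lean document; each statement's English description precedes it below -/
import Mathlib

section
/- Let k ≥ 1 be an integer and n = 2k + 3. Consider all bijections assigning to the labels a_1, a_2, a_3, b_1, …, b_{2k} pairwise distinct values in ℤ/n (i.e. all enumerations of ℤ/n) such that the 4-tuple of values (a_1, a_2, a_3, b_1) is in cyclic order. The sum, over all such bijections, of sgn_c(a_1, a_2, a_3, b_1, …, b_{2k}) · Σ_{i=1}^{3} sgn_c(a_i, b_1, b_2, …, b_{2k}) equals (2k+3)! / (2·(2k+1)). Equivalently, the number of such bijections is (2k+3)!/6 and the average value of the summand over them is 3/(2k+1). -/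
/-!
Write `n = 2k+3`. For an injective tuple of odd length the cyclic sign is `(-1)` to the
number of inversions after cutting the cycle `ℤ/n` at any point: moving the cut past one entry inverts an
even number of pairs (`linSign_flip`, `cycSign_eq`).

Cutting at `a₁` and comparing inversions, `sgn_c(a₁,a₂,a₃,b) · sgn_c(a₁,b)` is `(-1)^p`, where `p` is
the number of `b`'s strictly between `a₂` and `a₃`; as the tuple enumerates `ℤ/n` this is determined
by `a₃ - a₂` (`cycSign_mul_aTuple`). The other two terms follow by rotating the `a`'s, an even
permutation (`summand_eq`). So the summand is `(-1)^p + (-1)^q + (-1)^r`, where `p, q, r` are the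
numbers of points on the three open arcs cut out by the `a`'s, and `p + q + r = 2k`.

The sum is then found by averaging over relabellings (`sum_average`). Averaging `b₁` over all the `b`'s
weights each cyclically ordered triple by `r / 2k`, which by rotation symmetry may be replaced by
`1/3`; by the same symmetry the three signs contribute equally, so the sum equals that of `(-1)^p`
over enumerations with `a₁, a₂, a₃` in cyclic order, `p` being the number of points between `a₁` and
`a₂` (`sum_four_eq`). Averaging next over the label of `a₃` and then over that of `a₂` gives
`(2k+2)(2k+1) S = n! · ∑_{d=1}^{n-1} (n-1-d)(-1)^{d-1} = n! (k+1)` (`alt_sum`).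
-/


/-- A tuple of elements of `ZMod n` is *in cyclic order* if it admits integer
representatives `y 0 < y 1 < ⋯ < y (m-1) < y 0 + n`. -/
def InCyclicOrder (n : ℕ) {m : ℕ} (x : Fin m → ZMod n) : Prop :=
  ∃ y : Fin m → ℤ, StrictMono y ∧ (∀ i, ((y i : ℤ) : ZMod n) = x i) ∧
    ∀ i j, y i < y j + (n : ℤ)

open Classical in
/-- The cyclic sign of a tuple of elements of `ZMod n`: it is `0` if the entries
are not pairwise distinct, and otherwise the sign of any permutation `σ` putting
the tuple in cyclic order (well defined for tuples of odd length). -/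
noncomputable def cycSign (n : ℕ) {m : ℕ} (x : Fin m → ZMod n) : ℤ :=
  if h : ∃ σ : Equiv.Perm (Fin m), InCyclicOrder n (x ∘ σ) then
    ((Equiv.Perm.sign h.choose : ℤˣ) : ℤ)
  else 0

/-- From an enumeration `e = (a₁, a₂, a₃, b₁, …, b_{2k})` of `ℤ/(2k+3)` and
`i ∈ {0,1,2}`, the `(2k+1)`-tuple `(a_{i+1}, b₁, …, b_{2k})`. -/
def aTuple (k : ℕ) (e : Fin (2 * k + 3) → ZMod (2 * k + 3)) (i : Fin 3) :
    Fin (2 * k + 1) → ZMod (2 * k + 3) :=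
  fun j =>
    if (j : ℕ) = 0 then e ⟨(i : ℕ), by have := i.isLt; omega⟩
    else e ⟨(j : ℕ) + 2, by have := j.isLt; omega⟩

section

open Finset

/-! ### Linear and cyclic signs -/

/-- The sign of a linearly ordered tuple: the product of the signs of `y j - y i` over `i < j`. It is
`0` when two entries coincide, and otherwise `(-1)` to the number of inversions. -/
noncomputable def linSign {m : ℕ} (y : Fin m → ℤ) : ℤ :=
  ∏ i, ∏ j ∈ Ioi i, (y j - y i).sign

theorem linSign_eq_det {m : ℕ} (y : Fin m → ℤ) :
    linSign y = (Matrix.vandermonde y).det.sign := by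
  rw [Matrix.det_vandermonde]
  let s : ℤ →* ℤ := ⟨⟨Int.sign, Int.sign_one⟩, Int.sign_mul⟩
  change _ = s _
  simp only [map_prod]
  rfl

theorem linSign_comp_perm {m : ℕ} (y : Fin m → ℤ) (σ : Equiv.Perm (Fin m)) :
    linSign (y ∘ σ) = (Equiv.Perm.sign σ : ℤ) * linSign y := by
  rw [linSign_eq_det, linSign_eq_det]
  have h : Matrix.vandermonde (y ∘ σ) = (Matrix.vandermonde y).submatrix σ id := by
    ext i j; simp [Matrix.vandermonde_apply]
  rw [h, Matrix.det_permute, Int.sign_mul]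
  congr 1
  rcases Int.units_eq_one_or (Equiv.Perm.sign σ) with h | h <;> simp [h]

theorem linSign_succ {m : ℕ} (y : Fin (m + 1) → ℤ) :
    linSign y = (∏ j : Fin m, (y j.succ - y 0).sign) * linSign (y ∘ Fin.succ) := by
  simp [linSign, Fin.prod_univ_succ, Fin.prod_Ioi_succ]

theorem linSign_eq_one {m : ℕ} {y : Fin m → ℤ} (h : StrictMono y) : linSign y = 1 := by
  refine prod_eq_one fun i _ => prod_eq_one fun j hj => ?_
  exact Int.sign_eq_one_of_pos (sub_pos.2 (h (mem_Ioi.1 hj)))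

theorem linSign_mul_self {m : ℕ} {y : Fin m → ℤ} (h : Function.Injective y) :
    linSign y * linSign y = 1 := by
  simp only [linSign, ← prod_mul_distrib]
  refine prod_eq_one fun i _ => prod_eq_one fun j hj => ?_
  have : y j - y i ≠ 0 := sub_ne_zero.2 (h.ne (mem_Ioi.1 hj).ne')
  rcases Int.lt_or_gt_of_ne this with h | h
  · simp [Int.sign_eq_neg_one_of_neg h]
  · simp [Int.sign_eq_one_of_pos h]

theorem linSign_add_const {m : ℕ} (y : Fin m → ℤ) (t : ℤ) :
    linSign (fun i => y i + t) = linSign y := by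
  simp [linSign]

/-- If the minimal entry of a tuple of odd length becomes the maximal one while the others keep their
relative order, an even number of pairs is inverted, so the sign does not change. -/
theorem linSign_flip {m : ℕ} (hm : Odd m) {y z : Fin m → ℤ} {t : ℤ} (p : Fin m)
    (hne : ∀ i, i ≠ p → z i = y i + t) (hy : ∀ i, i ≠ p → y p < y i)
    (hz : ∀ i, i ≠ p → z i < z p) : linSign z = linSign y := by
  obtain ⟨m, rfl⟩ : ∃ l, m = l + 1 := ⟨m - 1, by have := p.pos; omega⟩
  have hm' : Even m := by
    rcases hm with ⟨l, hl⟩; exact ⟨l, by omega⟩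
  -- Moving `p` to the front changes both signs by the same factor.
  suffices h : linSign (z ∘ Equiv.swap 0 p) = linSign (y ∘ Equiv.swap 0 p) by
    rw [linSign_comp_perm, linSign_comp_perm] at h
    exact mul_left_cancel₀ (by simp) h
  have hs : ∀ j : Fin m, Equiv.swap 0 p j.succ ≠ p := fun j h => by
    rw [Equiv.swap_apply_eq_iff, Equiv.swap_apply_right] at h
    exact Fin.succ_ne_zero j h
  rw [linSign_succ, linSign_succ (y ∘ _)]
  congr 1
  · have h1 : ∀ j : Fin m, ((z ∘ Equiv.swap 0 p) j.succ - (z ∘ Equiv.swap 0 p) 0).sign = -1 :=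
      fun j => Int.sign_eq_neg_one_of_neg (by simpa using hz _ (hs j))
    have h2 : ∀ j : Fin m, ((y ∘ Equiv.swap 0 p) j.succ - (y ∘ Equiv.swap 0 p) 0).sign = 1 :=
      fun j => Int.sign_eq_one_of_pos (by simpa using hy _ (hs j))
    simp only [h1, h2]
    simp [hm'.neg_one_pow]
  · rw [← linSign_add_const ((y ∘ _) ∘ _) t]
    congr 1
    ext j
    exact hne _ (hs j)

/-- The positions of the entries of `x` in the linear order on `ℤ/n` obtained by cutting the cycle
just before `c`. -/
def relPos {n m : ℕ} (c : ZMod n) (x : Fin m → ZMod n) : Fin m → ℤ :=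
  fun i => ((x i - c).val : ℤ)

theorem relPos_injective {n m : ℕ} [NeZero n] (c : ZMod n) {x : Fin m → ZMod n}
    (hx : Function.Injective x) : Function.Injective (relPos c x) := fun i j h => by
  have h' : (x i - c).val = (x j - c).val := Int.ofNat.inj h
  exact hx (sub_left_injective (ZMod.val_injective n h'))

theorem val_sub_one {n : ℕ} [NeZero n] {a : ZMod n} (ha : a ≠ 0) :
    ((a - 1).val : ℤ) = a.val - 1 := by
  have h0 : 0 < a.val := ZMod.val_pos.2 ha
  have hlt := ZMod.val_lt a
  have h : a - 1 = ((a.val - 1 : ℕ) : ZMod n) := by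
    rw [Nat.cast_sub h0]; simp
  rw [h, ZMod.val_natCast, Nat.mod_eq_of_lt (by omega)]
  omega

theorem val_neg_one' {n : ℕ} [NeZero n] : (((-1 : ZMod n)).val : ℤ) = n - 1 := by
  obtain ⟨l, rfl⟩ := Nat.exists_eq_succ_of_ne_zero (NeZero.ne n)
  rw [ZMod.val_neg_one]; simp

theorem linSign_relPos_add_one {n m : ℕ} [NeZero n] (hm : Odd m) {x : Fin m → ZMod n}
    (hx : Function.Injective x) (c : ZMod n) :
    linSign (relPos (c + 1) x) = linSign (relPos c x) := by
  have key : ∀ i, x i ≠ c → relPos (c + 1) x i = relPos c x i + (-1) := fun i hi => by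
    have := val_sub_one (sub_ne_zero.2 hi)
    simp only [relPos]
    rw [← sub_sub, this]; ring
  by_cases h : ∃ p, x p = c
  · obtain ⟨p, hp⟩ := h
    have hne : ∀ i, i ≠ p → x i ≠ c := fun i hi h => hi (hx (h.trans hp.symm))
    refine linSign_flip (t := -1) hm p (fun i hi => key i (hne i hi)) (fun i hi => ?_)
      (fun i hi => ?_)
    · have : 0 < (x i - c).val := ZMod.val_pos.2 (sub_ne_zero.2 (hne i hi))
      simp only [relPos, hp, sub_self, ZMod.val_zero]
      exact_mod_cast this
    · rw [key i (hne i hi)]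
      have := ZMod.val_lt (x i - c)
      simp only [relPos, hp, sub_add_cancel_left, val_neg_one']
      omega
  · push Not at h
    rw [← linSign_add_const (relPos c x) (-1)]
    congr 1
    ext i
    exact key i (h i)

/-- For tuples of odd length the linear sign does not depend on where the cycle is cut. -/
theorem linSign_relPos_eq {n m : ℕ} [NeZero n] (hm : Odd m) {x : Fin m → ZMod n}
    (hx : Function.Injective x) (c d : ZMod n) :
    linSign (relPos c x) = linSign (relPos d x) := by
  suffices h : ∀ (l : ℕ), linSign (relPos (l : ZMod n) x) = linSign (relPos 0 x) by
    rw [← ZMod.natCast_zmod_val c, ← ZMod.natCast_zmod_val d, h, h]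
  intro l
  induction l with
  | zero => simp
  | succ l ih => rw [Nat.cast_succ, linSign_relPos_add_one hm hx, ih]

theorem inCyclicOrder_iff {n m : ℕ} [NeZero n] (x : Fin (m + 1) → ZMod n) :
    InCyclicOrder n x ↔ StrictMono (relPos (x 0) x) := by
  constructor
  · rintro ⟨y, hy, hyx, hlt⟩
    have : relPos (x 0) x = fun i => y i - y 0 := by
      ext i
      have h0 : y 0 ≤ y i := hy.monotone (Fin.zero_le i)
      have h1 := hlt i 0
      simp only [relPos]
      rw [← hyx, ← hyx, ← Int.cast_sub, ZMod.val_intCast]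
      exact Int.emod_eq_of_lt (by omega) (by omega)
    rw [this]
    intro i j hij
    have := hy hij
    simpa using this
  · intro h
    refine ⟨fun i => relPos (x 0) x i + (x 0).val, fun i j hij => by have := h hij; simpa using this,
      fun i => by simp [relPos], fun i j => ?_⟩
    have h1 := ZMod.val_lt (x i - x 0)
    simp only [relPos]
    omega

/-- For an injective tuple of odd length the cyclic sign is the linear sign with respect to any cut. -/
theorem cycSign_eq {n m : ℕ} [NeZero n] (hm : Odd m) {x : Fin m → ZMod n}
    (hx : Function.Injective x) (c : ZMod n) : cycSign n x = linSign (relPos c x) := by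
  obtain ⟨m, rfl⟩ : ∃ l, m = l + 1 := ⟨m - 1, by have := hm.pos; omega⟩
  have hex : ∃ σ : Equiv.Perm (Fin (m + 1)), InCyclicOrder n (x ∘ σ) := by
    refine ⟨Tuple.sort (relPos (x 0) x), ?_⟩
    have h1 := Tuple.monotone_sort (relPos (x 0) x)
    have h2 := h1.strictMono_of_injective
      ((relPos_injective (x 0) hx).comp (Equiv.injective _))
    refine ⟨_, h2.add_const ((x 0).val : ℤ), fun i => by simp [relPos], fun i j => ?_⟩
    have h1 := ZMod.val_lt (x (Tuple.sort (relPos (x 0) x) i) - x 0)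
    simp only [relPos, Function.comp]
    omega
  unfold cycSign
  rw [dif_pos hex]
  have h := (inCyclicOrder_iff _).1 hex.choose_spec
  have h1 := linSign_eq_one h
  rw [linSign_relPos_eq hm (hx.comp (Equiv.injective _)) _ c] at h1
  change linSign (relPos c x ∘ hex.choose) = 1 at h1
  rw [linSign_comp_perm] at h1
  rcases Int.units_eq_one_or (Equiv.Perm.sign hex.choose) with h | h <;>
    rw [h] at h1 ⊢ <;> simp at h1 ⊢ <;> omega

/-! ### Sums over `ℤ/n` and the cyclic order of three or four points -/

theorem sum_zmod_val {M : Type*} [AddCommMonoid M] (n : ℕ) [NeZero n] (f : ℕ → M) :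
    ∑ z : ZMod n, f z.val = ∑ t ∈ range n, f t := by
  obtain ⟨l, rfl⟩ := Nat.exists_eq_succ_of_ne_zero (NeZero.ne n)
  exact Fin.sum_univ_eq_sum_range f (l + 1)

theorem prod_zmod_val {M : Type*} [CommMonoid M] (n : ℕ) [NeZero n] (f : ℕ → M) :
    ∏ z : ZMod n, f z.val = ∏ t ∈ range n, f t := by
  obtain ⟨l, rfl⟩ := Nat.exists_eq_succ_of_ne_zero (NeZero.ne n)
  exact Fin.prod_univ_eq_prod_range f (l + 1)

/-- The three points `a, b, c` of `ℤ/n` are pairwise distinct and in cyclic order, expressed in the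
linear order cut at `a`. -/
def Cyc3 {n : ℕ} (a b c : ZMod n) : Prop :=
  0 < (b - a).val ∧ (b - a).val < (c - a).val

theorem val_sub_comm {n : ℕ} [NeZero n] {a b : ZMod n} (h : 0 < (b - a).val) :
    (a - b).val = n - (b - a).val := by
  have : NeZero (b - a) := ⟨ZMod.val_pos.1 h⟩
  rw [← neg_sub, ZMod.val_neg_of_ne_zero]

theorem Cyc3.val_sub {n : ℕ} [NeZero n] {a b c : ZMod n} (h : Cyc3 a b c) :
    (c - b).val = (c - a).val - (b - a).val := by
  rw [← ZMod.val_sub h.2.le]; congr 1; ring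

theorem Cyc3.rotate {n : ℕ} [NeZero n] {a b c : ZMod n} (h : Cyc3 a b c) : Cyc3 b c a := by
  have h1 := h.val_sub
  have h2 := val_sub_comm h.1
  have h3 := ZMod.val_lt (c - a)
  obtain ⟨h4, h5⟩ := h
  constructor <;> omega

theorem cyc3_rotate_iff {n : ℕ} [NeZero n] {a b c : ZMod n} : Cyc3 b c a ↔ Cyc3 a b c :=
  ⟨fun h => h.rotate.rotate, Cyc3.rotate⟩

theorem inCyclicOrder_four {n : ℕ} [NeZero n] (a b c d : ZMod n) :
    InCyclicOrder n ![a, b, c, d] ↔ Cyc3 a b c ∧ (c - a).val < (d - a).val := by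
  rw [inCyclicOrder_iff, Fin.strictMono_iff_lt_succ]
  simp only [Fin.forall_fin_succ, relPos, Cyc3]
  simp [and_assoc, -ZMod.natCast_val]

/-! ### The product of two cyclic signs -/

/-- Comparing every entry of `v` with both `p` and `q` produces a sign `-1` exactly for the entries
strictly between them. -/
theorem linSign_tail_pair {m : ℕ} {p q : ℤ} {v : Fin m → ℤ} (hpq : p < q)
    (hp : ∀ i, v i ≠ p) (hq : ∀ i, v i ≠ q) :
    (∏ i, (v i - p).sign) * ∏ i, (v i - q).sign = ∏ i, if p < v i ∧ v i < q then -1 else 1 := by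
  rw [← prod_mul_distrib]
  refine prod_congr rfl fun i _ => ?_
  rcases lt_or_gt_of_ne (hp i) with h1 | h1 <;> rcases lt_or_gt_of_ne (hq i) with h2 | h2
  · rw [Int.sign_eq_neg_one_of_neg (by omega), Int.sign_eq_neg_one_of_neg (by omega),
      if_neg (by omega)]; rfl
  · omega
  · rw [Int.sign_eq_one_of_pos (by omega), Int.sign_eq_neg_one_of_neg (by omega),
      if_pos (by omega)]; rfl
  · rw [Int.sign_eq_one_of_pos (by omega), Int.sign_eq_one_of_pos (by omega),
      if_neg (by omega)]; rfl

/-- On the arc cut at `a`, the product of `-1` over the points strictly between positions `p` and `q`. -/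
theorem prod_between {n : ℕ} [NeZero n] (a : ZMod n) {p q : ℕ} (hq : q < n) :
    (∏ z : ZMod n, if (p : ℤ) < ((z - a).val : ℤ) ∧ ((z - a).val : ℤ) < q then (-1 : ℤ) else 1)
      = (-1) ^ (q - p - 1) := by
  rw [← Equiv.prod_comp (Equiv.addRight a)]
  simp only [Equiv.coe_addRight, add_sub_cancel_right]
  rw [
    prod_zmod_val n (fun t => if (p : ℤ) < (t : ℤ) ∧ (t : ℤ) < q then (-1 : ℤ) else 1),
    prod_ite, prod_const_one, mul_one, prod_const, ← Nat.card_Ioo]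
  congr 2
  ext t
  simp only [mem_filter, mem_range, mem_Ioo]
  omega

/-- The product of the two cyclic signs is `(-1)` to the number of points strictly between
`a₂ = e 1` and `a₃ = e 2`. After cutting at `a₁`, the signs of the pairs inside `(a₁, b₁, …)` cancel
and only the pairs involving `a₂` or `a₃` remain; since `e` is an enumeration and `a₁` lies outside
the arc, every point of the open arc from `a₂` to `a₃` is one of the `b`. -/
theorem cycSign_mul_aTuple {k : ℕ} (e : Fin (2 * k + 3) ≃ ZMod (2 * k + 3))
    (h : Cyc3 (e 0) (e 1) (e 2)) :
    cycSign (2 * k + 3) e * cycSign (2 * k + 3) (aTuple k e 0) = -(-1) ^ (e 2 - e 1).val := by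
  have hs1 : (1 : Fin (2 * k + 3)) = Fin.succ 0 := (Fin.succ_zero_eq_one).symm
  have hs2 : (2 : Fin (2 * k + 3)) = Fin.succ (Fin.succ 0) := by
    rw [Fin.succ_zero_eq_one, Fin.succ_one_eq_two]
  have hval := h.val_sub
  have hlt := h.2
  rw [hs1, hs2] at hval hlt h ⊢
  have hinj : Function.Injective (aTuple k e 0) := by
    intro i j hij
    simp only [aTuple] at hij
    split_ifs at hij with h1 h2 h2 <;> have := e.injective hij <;>
      rw [Fin.ext_iff] at this ⊢ <;> dsimp only at this <;> omega
  rw [cycSign_eq ⟨k + 1, by ring⟩ e.injective (e 0), cycSign_eq ⟨k, rfl⟩ hinj (e 0)]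
  -- `v` lists the positions of the `b`, and `p`, `q` are those of `a₂`, `a₃`.
  set v : Fin (2 * k) → ℤ := fun i => ((e i.succ.succ.succ - e 0).val : ℤ) with hv
  set p := (e (Fin.succ 0) - e 0).val with hp
  set q := (e (Fin.succ (Fin.succ 0)) - e 0).val with hq
  have hvinj : Function.Injective v := fun i j hij => by
    have := relPos_injective (e 0) e.injective hij
    simpa using this
  have hpos : ∀ i : Fin (2 * k + 3), i ≠ 0 →
      (relPos (e 0) e i - relPos (e 0) e 0).sign = 1 :=
    fun i hi => by
      have : 0 < (e i - e 0).val := ZMod.val_pos.2 (sub_ne_zero.2 (e.injective.ne hi))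
      refine Int.sign_eq_one_of_pos ?_
      simp only [relPos, sub_self, ZMod.val_zero]
      omega
  have hpq : (p : ℤ) < q := by exact_mod_cast h.2
  have h1 : linSign (relPos (e 0) e) =
      (∏ i, (v i - p).sign) * (∏ i, (v i - q).sign) * linSign v := by
    rw [linSign_succ, linSign_succ, linSign_succ, Fin.prod_univ_succ (n := 2 * k),
      prod_eq_one fun j _ => hpos _ (Fin.succ_ne_zero j), one_mul]
    have : (((relPos (e 0) e ∘ Fin.succ) (Fin.succ 0) -
        (relPos (e 0) e ∘ Fin.succ) 0)).sign = 1 :=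
      Int.sign_eq_one_of_pos (sub_pos.2 hpq)
    rw [this, one_mul, mul_assoc]
    rfl
  have h2 : linSign (relPos (e 0) (aTuple k e 0)) = linSign v := by
    rw [linSign_succ]
    have h0 : relPos (e 0) (aTuple k e 0) 0 = ((e 0 - e 0).val : ℤ) := rfl
    have hs : relPos (e 0) (aTuple k e 0) ∘ Fin.succ = v := by
      ext i
      simp only [Function.comp, relPos, aTuple, Fin.val_succ, hv]
      rw [if_neg (Nat.succ_ne_zero _)]
      rfl
    have hs' : ∀ j, relPos (e 0) (aTuple k e 0) j.succ = v j := congrFun hs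
    rw [hs, h0, prod_eq_one fun j _ => ?_, one_mul]
    rw [hs']
    exact hpos j.succ.succ.succ (Fin.succ_ne_zero _)
  have hvne : ∀ (l : Fin (2 * k + 3)) (i : Fin (2 * k)), i.succ.succ.succ ≠ l →
      v i ≠ (e l - e 0).val := fun l i hl h =>
    hl (relPos_injective (e 0) e.injective (a₁ := i.succ.succ.succ) (a₂ := l) h)
  rw [h1, h2, mul_assoc, linSign_mul_self hvinj, mul_one, linSign_tail_pair hpq
    (fun i => hvne (Fin.succ 0) i fun h => Fin.succ_ne_zero _ (Fin.succ_injective _ h))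
    (fun i => hvne (Fin.succ (Fin.succ 0)) i fun h =>
      Fin.succ_ne_zero _ (Fin.succ_injective _ (Fin.succ_injective _ h)))]
  -- The product over the `b` extends to all of `ℤ/n`, since `a₁, a₂, a₃` contribute `1`.
  have h3 := prod_between (p := p) (q := q) (e 0) (ZMod.val_lt _)
  rw [← e.prod_comp, Fin.prod_univ_succ, Fin.prod_univ_succ, Fin.prod_univ_succ] at h3
  have h0 : ¬ ((p : ℤ) < ((e 0 - e 0).val : ℤ) ∧ ((e 0 - e 0).val : ℤ) < q) := by
    rw [sub_self, ZMod.val_zero]; omega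
  rw [if_neg h0, if_neg (fun h => lt_irrefl _ h.1), if_neg (fun h => lt_irrefl _ h.2), one_mul,
    one_mul, one_mul] at h3
  rw [h3, hval]
  obtain ⟨d, hd⟩ : ∃ d, q - p = d + 1 := ⟨q - p - 1, by omega⟩
  rw [hd, pow_succ]
  simp

/-! ### Averaging over enumerations -/

/-- Averaging over relabellings: if `F e z` depends on `e` only through its first `s` values and
vanishes when `z` is one of them, then `F e (e j)` has the same sum over all enumerations `e` for each
of the `n - s` labels `j ≥ s`, and together these exhaust the sum over all `z`. -/
theorem sum_average {n : ℕ} [NeZero n] (s : Fin n) (F : (Fin n ≃ ZMod n) → ZMod n → ℚ)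
    (hF : ∀ e e' : Fin n ≃ ZMod n, (∀ i, i < s → e i = e' i) → F e = F e')
    (h0 : ∀ e j, j < s → F e (e j) = 0) :
    ∑ e, ∑ z, F e z = ((n : ℚ) - s) * ∑ e, F e (e s) := by
  have h1 : ∀ j, ∑ e : Fin n ≃ ZMod n, F e (e j) = if s ≤ j then ∑ e, F e (e s) else 0 := by
    intro j
    split_ifs with hj
    · -- Exchanging the labels `s` and `j` permutes the enumerations and does not affect `F`.
      rw [← (Equiv.equivCongr (Equiv.swap s j) (Equiv.refl (ZMod n))).sum_comp]
      refine sum_congr rfl fun e _ => ?_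
      have : (Equiv.swap s j).equivCongr (Equiv.refl (ZMod n)) e = (Equiv.swap s j).trans e := by
        ext; simp
      rw [this, hF _ e fun i hi => ?_]
      · simp
      · rw [Equiv.trans_apply, Equiv.swap_apply_of_ne_of_ne hi.ne (hi.trans_le hj).ne]
    · exact sum_eq_zero fun e _ => h0 e j (not_le.1 hj)
  calc ∑ e, ∑ z, F e z = ∑ e : Fin n ≃ ZMod n, ∑ j, F e (e j) :=
        sum_congr rfl fun e _ => (e.sum_comp (F e)).symm
    _ = ∑ j, ∑ e, F e (e j) := sum_comm
    _ = _ := by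
        rw [sum_congr rfl fun j _ => h1 j, ← sum_filter, sum_const, nsmul_eq_mul]
        congr 1
        have : (univ.filter (s ≤ ·)) = Ici s := by ext; simp
        rw [this, Fin.card_Ici, Nat.cast_sub s.2.le]

open Classical in
/-- There are `n - 1 - (b - a).val` points on the open arc from `b` to `a`. -/
theorem sum_cyc3 {n : ℕ} [NeZero n] {a b : ZMod n} (hab : a ≠ b) (t : ℚ) :
    ∑ z, (if Cyc3 a b z then t else 0) = ((n : ℚ) - 1 - (b - a).val) * t := by
  have h0 : 0 < (b - a).val := ZMod.val_pos.2 (sub_ne_zero.2 hab.symm)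
  have hlt := ZMod.val_lt (b - a)
  rw [← Equiv.sum_comp (Equiv.addRight a)]
  simp only [Cyc3, Equiv.coe_addRight, add_sub_cancel_right, h0, true_and]
  rw [sum_zmod_val n (fun s => if (b - a).val < s then t else 0), ← sum_filter, sum_const,
    nsmul_eq_mul]
  have : (range n).filter ((b - a).val < ·) = Ioo (b - a).val n := by
    ext s; simp only [mem_filter, mem_range, mem_Ioo]; omega
  rw [this, Nat.card_Ioo, Nat.cast_sub (by omega), Nat.cast_sub (by omega)]
  push_cast
  ring

open Classical in
/-- If `a, b, c` are in cyclic order, there are `(a - c).val - 1` points on the open arc from `c`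
to `a`. -/
theorem sum_cyc4 {n : ℕ} [NeZero n] {a b c : ZMod n} (t : ℚ) :
    ∑ z, (if InCyclicOrder n ![a, b, c, z] then t else 0) =
      if Cyc3 a b c then ((a - c).val - 1 : ℚ) * t else 0 := by
  simp only [inCyclicOrder_four]
  split_ifs with h
  · have hca : 0 < (c - a).val := h.1.trans h.2
    have h2 := val_sub_comm hca
    have hlt := ZMod.val_lt (c - a)
    have hac : a ≠ c := fun h => by simp [h] at hca
    have h1 := sum_cyc3 hac t
    simp only [Cyc3, hca, true_and] at h1
    simp only [h, true_and]
    rw [h1, h2, Nat.cast_sub hlt.le]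
    ring
  · simp [h]

theorem alt_sum (k : ℕ) :
    ∑ s ∈ range (2 * k + 3), (if s = 0 then 0 else
      ((2 * k + 3 : ℕ) - 1 - s : ℚ) * (-(-1) ^ s)) = k + 1 := by
  rw [sum_range_succ']
  simp only [Nat.succ_ne_zero, if_false, if_true, add_zero]
  have h : ∀ (c : ℚ) (l : ℕ), ∑ s ∈ range (2 * l),
      ((c - (s + 1 : ℕ) : ℚ)) * (-(-1) ^ (s + 1)) = l := by
    intro c l
    induction l with
    | zero => simp
    | succ l ih =>
      rw [show 2 * (l + 1) = 2 * l + 1 + 1 by ring, sum_range_succ, sum_range_succ, ih]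
      have : ((-1 : ℚ)) ^ (2 * l) = 1 := by simp
      simp only [pow_succ, this]
      push_cast
      ring
  have := h ((2 * k + 3 : ℕ) - 1) (k + 1)
  rw [show 2 * k + 2 = 2 * (k + 1) by ring, this]
  push_cast; rfl

/-- The sign `(-1) ^ p`, where `p = (b - a).val - 1` is the number of points strictly between `a` and `b`
on the arc from `a` to `b` (for `a ≠ b`). -/
def altWeight {n : ℕ} (a b : ZMod n) : ℚ := -(-1) ^ (b - a).val

theorem sum_perm {n : ℕ} [NeZero n] (ρ : Equiv.Perm (Fin n)) (F : (Fin n ≃ ZMod n) → ℚ) :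
    ∑ e : Fin n ≃ ZMod n, F (ρ.trans e) = ∑ e, F e := by
  rw [← (Equiv.equivCongr ρ (Equiv.refl (ZMod n))).sum_comp]
  refine sum_congr rfl fun e _ => ?_
  congr 1
  ext i
  simp

theorem fin_val_one (k : ℕ) : ((1 : Fin (2 * k + 3)) : ℕ) = 1 := by simp

theorem fin_val_two (k : ℕ) : ((2 : Fin (2 * k + 3)) : ℕ) = 2 :=
  Nat.mod_eq_of_lt (by omega : 2 < 2 * k + 3)

theorem fin_val_three {k : ℕ} (hk : 1 ≤ k) : ((3 : Fin (2 * k + 3)) : ℕ) = 3 :=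
  Nat.mod_eq_of_lt (by omega : 3 < 2 * k + 3)

theorem card_enum {n : ℕ} [NeZero n] : Fintype.card (Fin n ≃ ZMod n) = n.factorial := by
  rw [Fintype.card_equiv (ZMod.finEquiv n).toEquiv, Fintype.card_fin]

/-- Averaging the label `1` over all values different from `e 0`. -/
theorem sum_altWeight_pair (k : ℕ) :
    (2 * k + 2 : ℚ) * ∑ e : Fin (2 * k + 3) ≃ ZMod (2 * k + 3),
      ((2 * k + 3 : ℕ) - 1 - (e 1 - e 0).val : ℚ) * altWeight (e 0) (e 1) =
      (2 * k + 3).factorial * (k + 1) := by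
  set f : ℕ → ℚ := fun s => if s = 0 then 0 else ((2 * k + 3 : ℕ) - 1 - s : ℚ) * (-(-1) ^ s)
  have h := sum_average (n := 2 * k + 3) 1 (fun e z => f (z - e 0).val) (fun e e' he => ?_)
    (fun e j hj => ?_)
  · have h1 : ∀ a : ZMod (2 * k + 3), ∑ z, f (z - a).val = k + 1 := fun a => by
      rw [← Equiv.sum_comp (Equiv.addRight a)]
      simp only [Equiv.coe_addRight, add_sub_cancel_right]
      rw [sum_zmod_val, alt_sum]
    simp only [h1, sum_const, card_univ, card_enum, nsmul_eq_mul] at h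
    rw [h]
    congr 1
    · push_cast
      simp
      ring
    · refine sum_congr rfl fun e _ => ?_
      have : (e 1 - e 0).val ≠ 0 := by
        rw [Ne, ZMod.val_eq_zero, sub_eq_zero]
        exact e.injective.ne one_ne_zero
      simp only [f, this, if_false, altWeight]
  · have h0 := he 0 (by rw [Fin.lt_def, fin_val_one]; simp)
    simp only [h0]
  · obtain rfl : j = 0 := by
      rw [Fin.lt_def, fin_val_one] at hj
      exact Fin.ext (by rw [Fin.val_zero]; omega)
    simp [f]

open Classical in
/-- Averaging the label `2` over the open arc from `e 1` to `e 0`. -/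
theorem sum_altWeight_triple (k : ℕ) :
    (2 * k + 1 : ℚ) * ∑ e : Fin (2 * k + 3) ≃ ZMod (2 * k + 3),
      (if Cyc3 (e 0) (e 1) (e 2) then altWeight (e 0) (e 1) else 0) =
      ∑ e : Fin (2 * k + 3) ≃ ZMod (2 * k + 3),
      ((2 * k + 3 : ℕ) - 1 - (e 1 - e 0).val : ℚ) * altWeight (e 0) (e 1) := by
  have h := sum_average (n := 2 * k + 3) 2
    (fun e z => if Cyc3 (e 0) (e 1) z then altWeight (e 0) (e 1) else 0) (fun e e' he => ?_)
    (fun e j hj => ?_)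
  · rw [sum_congr rfl fun e _ => sum_cyc3 (e.injective.ne zero_ne_one) _] at h
    rw [h, fin_val_two]
    congr 1
    push_cast
    ring
  · have h0 := he 0 (by rw [Fin.lt_def, fin_val_two]; simp)
    have h1 := he 1 (by rw [Fin.lt_def, fin_val_two, fin_val_one]; simp)
    simp only [h0, h1]
  · rw [Fin.lt_def, fin_val_two] at hj
    have : j = 0 ∨ j = 1 := by
      rw [Fin.ext_iff, Fin.ext_iff, fin_val_one, Fin.val_zero]; omega
    rcases this with rfl | rfl <;> simp [Cyc3]

/-- The sum of the weights of the three arcs cut out by `a, b, c`. -/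
def arcSum {n : ℕ} (a b c : ZMod n) : ℚ := altWeight a b + altWeight b c + altWeight c a

open Classical in
/-- Averaging the label `3` over the open arc from `e 2` to `e 0`. -/
theorem sum_arcSum_four (k : ℕ) (hk : 1 ≤ k) :
    (2 * k : ℚ) * ∑ e : Fin (2 * k + 3) ≃ ZMod (2 * k + 3),
      (if InCyclicOrder (2 * k + 3) ![e 0, e 1, e 2, e 3] then arcSum (e 0) (e 1) (e 2) else 0) =
      ∑ e : Fin (2 * k + 3) ≃ ZMod (2 * k + 3),
      if Cyc3 (e 0) (e 1) (e 2) then ((e 0 - e 2).val - 1 : ℚ) * arcSum (e 0) (e 1) (e 2)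
        else 0 := by
  have h := sum_average (n := 2 * k + 3) 3
    (fun e z => if InCyclicOrder (2 * k + 3) ![e 0, e 1, e 2, z] then
      arcSum (e 0) (e 1) (e 2) else 0) (fun e e' he => ?_)
    (fun e j hj => ?_)
  · simp only [sum_cyc4] at h
    rw [h, fin_val_three hk]
    congr 1
    push_cast
    ring
  · have h0 := he 0 (by rw [Fin.lt_def, fin_val_three hk]; simp)
    have h1 := he 1 (by rw [Fin.lt_def, fin_val_three hk, fin_val_one]; simp)
    have h2 := he 2 (by rw [Fin.lt_def, fin_val_three hk, fin_val_two]; simp)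
    simp only [h0, h1, h2]
  · rw [Fin.lt_def, fin_val_three hk] at hj
    have : j = 0 ∨ j = 1 ∨ j = 2 := by
      rw [Fin.ext_iff, Fin.ext_iff, Fin.ext_iff, fin_val_one, fin_val_two, Fin.val_zero]; omega
    refine if_neg fun hc => ?_
    rw [inCyclicOrder_four] at hc
    obtain ⟨⟨hc1, hc2⟩, hc3⟩ := hc
    rcases this with rfl | rfl | rfl
    · simp at hc3
    · omega
    · omega

/-- The cyclic permutation `0 ↦ 1 ↦ 2 ↦ 0` of the first three indices. -/
def rotPerm (k : ℕ) : Equiv.Perm (Fin (2 * k + 3)) := Equiv.swap 0 1 * Equiv.swap 1 2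

theorem fin_ne (k : ℕ) : (0 : Fin (2 * k + 3)) ≠ 1 ∧ (0 : Fin (2 * k + 3)) ≠ 2 ∧
    (1 : Fin (2 * k + 3)) ≠ 2 := by
  simp only [Ne, Fin.ext_iff, fin_val_one, fin_val_two, Fin.val_zero]
  omega

theorem rotPerm_zero (k : ℕ) : rotPerm k 0 = 1 := by
  obtain ⟨h1, h2, h3⟩ := fin_ne k
  rw [rotPerm, Equiv.Perm.mul_apply, Equiv.swap_apply_of_ne_of_ne h1 h2, Equiv.swap_apply_left]

theorem rotPerm_one (k : ℕ) : rotPerm k 1 = 2 := by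
  obtain ⟨h1, h2, h3⟩ := fin_ne k
  rw [rotPerm, Equiv.Perm.mul_apply, Equiv.swap_apply_left,
    Equiv.swap_apply_of_ne_of_ne h2.symm h3.symm]

theorem rotPerm_two (k : ℕ) : rotPerm k 2 = 0 := by
  rw [rotPerm, Equiv.Perm.mul_apply, Equiv.swap_apply_right, Equiv.swap_apply_right]

theorem rotPerm_of_le (k : ℕ) {j : Fin (2 * k + 3)} (hj : 3 ≤ (j : ℕ)) : rotPerm k j = j := by
  have h0 : j ≠ 0 := fun h => by rw [h, Fin.val_zero] at hj; omega
  have h1 : j ≠ 1 := fun h => by rw [h, fin_val_one] at hj; omega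
  have h2 : j ≠ 2 := fun h => by rw [h, fin_val_two] at hj; omega
  rw [rotPerm, Equiv.Perm.mul_apply, Equiv.swap_apply_of_ne_of_ne h1 h2,
    Equiv.swap_apply_of_ne_of_ne h0 h1]

theorem sign_rotPerm (k : ℕ) : Equiv.Perm.sign (rotPerm k) = 1 := by
  obtain ⟨h1, h2, h3⟩ := fin_ne k
  rw [rotPerm, Equiv.Perm.sign_mul, Equiv.Perm.sign_swap h1, Equiv.Perm.sign_swap h3]
  rfl

open Classical in
/-- The sums over cyclically ordered triples are invariant under rotating the labels `0, 1, 2`. -/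
theorem sum_rotate (k : ℕ) (F : ZMod (2 * k + 3) → ZMod (2 * k + 3) → ZMod (2 * k + 3) → ℚ) :
    ∑ e : Fin (2 * k + 3) ≃ ZMod (2 * k + 3),
      (if Cyc3 (e 0) (e 1) (e 2) then F (e 1) (e 2) (e 0) else 0) =
    ∑ e : Fin (2 * k + 3) ≃ ZMod (2 * k + 3),
      (if Cyc3 (e 0) (e 1) (e 2) then F (e 0) (e 1) (e 2) else 0) := by
  rw [← sum_perm (rotPerm k) fun e => if Cyc3 (e 0) (e 1) (e 2) then F (e 0) (e 1) (e 2) else 0]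
  simp only [Equiv.trans_apply, rotPerm_zero, rotPerm_one, rotPerm_two, cyc3_rotate_iff]

open Classical in
/-- The condition on `b₁` weights each cyclically ordered triple by the length of one of its three arcs.
The symmetric function `arcSum` is unaffected by rotating the labels, so that the weight may be replaced
by the mean `2 k / 3` of the three arc lengths. -/
theorem sum_four_eq (k : ℕ) (hk : 1 ≤ k) :
    ∑ e : Fin (2 * k + 3) ≃ ZMod (2 * k + 3),
      (if InCyclicOrder (2 * k + 3) ![e 0, e 1, e 2, e 3] then arcSum (e 0) (e 1) (e 2) else 0) =
    ∑ e : Fin (2 * k + 3) ≃ ZMod (2 * k + 3),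
      (if Cyc3 (e 0) (e 1) (e 2) then altWeight (e 0) (e 1) else 0) := by
  have h1 := sum_arcSum_four k hk
  have h2 := sum_rotate k (fun a b c => ((a - c).val - 1 : ℚ) * arcSum a b c)
  have h3 := sum_rotate k (fun a b c => ((b - a).val - 1 : ℚ) * arcSum a b c)
  have h4 := sum_rotate k (fun a b _ => altWeight a b)
  have h5 := sum_rotate k (fun a _ c => altWeight c a)
  have hG : ∑ e : Fin (2 * k + 3) ≃ ZMod (2 * k + 3),
      (if Cyc3 (e 0) (e 1) (e 2) then arcSum (e 0) (e 1) (e 2) else 0) =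
      3 * ∑ e : Fin (2 * k + 3) ≃ ZMod (2 * k + 3),
      (if Cyc3 (e 0) (e 1) (e 2) then altWeight (e 0) (e 1) else 0) := by
    have : ∀ e : Fin (2 * k + 3) ≃ ZMod (2 * k + 3),
        (if Cyc3 (e 0) (e 1) (e 2) then arcSum (e 0) (e 1) (e 2) else 0) =
        (if Cyc3 (e 0) (e 1) (e 2) then altWeight (e 0) (e 1) else 0) +
        (if Cyc3 (e 0) (e 1) (e 2) then altWeight (e 1) (e 2) else 0) +
        (if Cyc3 (e 0) (e 1) (e 2) then altWeight (e 2) (e 0) else 0) := fun e => by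
      split_ifs <;> simp [arcSum]
    rw [sum_congr rfl fun e _ => this e, sum_add_distrib, sum_add_distrib, ← h5, h4]
    linarith
  have hW : ∑ e : Fin (2 * k + 3) ≃ ZMod (2 * k + 3),
      (if Cyc3 (e 0) (e 1) (e 2) then ((e 0 - e 2).val - 1 : ℚ) * arcSum (e 0) (e 1) (e 2)
        else 0) * 3 = 2 * k * ∑ e : Fin (2 * k + 3) ≃ ZMod (2 * k + 3),
      (if Cyc3 (e 0) (e 1) (e 2) then arcSum (e 0) (e 1) (e 2) else 0) := by
    have hsum : ∀ e : Fin (2 * k + 3) ≃ ZMod (2 * k + 3),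
        2 * k * (if Cyc3 (e 0) (e 1) (e 2) then arcSum (e 0) (e 1) (e 2) else 0) =
        (if Cyc3 (e 0) (e 1) (e 2) then
          ((e 0 - e 2).val - 1 : ℚ) * arcSum (e 0) (e 1) (e 2) else 0) +
        (if Cyc3 (e 0) (e 1) (e 2) then
          ((e 1 - e 0).val - 1 : ℚ) * arcSum (e 1) (e 2) (e 0) else 0) +
        (if Cyc3 (e 0) (e 1) (e 2) then
          ((e 2 - e 1).val - 1 : ℚ) * arcSum (e 1) (e 2) (e 0) else 0) := fun e => by
      split_ifs with h
      · have hn : (e 0 - e 2).val + (e 1 - e 0).val + (e 2 - e 1).val = 2 * k + 3 := by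
          have h1 := h.val_sub
          have h2 := val_sub_comm (h.1.trans h.2)
          have h3 := ZMod.val_lt (e 2 - e 0)
          have h4 := h.2
          omega
        have hn' : ((e 0 - e 2).val + (e 1 - e 0).val + (e 2 - e 1).val : ℚ) = 2 * k + 3 := by
          exact_mod_cast hn
        have hr : arcSum (e 1) (e 2) (e 0) = arcSum (e 0) (e 1) (e 2) := by
          unfold arcSum; ring
        rw [hr, ← add_mul, ← add_mul]
        congr 1
        linarith
      · simp
    rw [mul_sum, sum_congr rfl fun e _ => hsum e, sum_add_distrib, sum_add_distrib, h3, h2,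
      ← sum_mul]
    have h6 := sum_rotate k (fun a b c => ((a - c).val - 1 : ℚ) * arcSum b c a)
    have hr : ∀ e : Fin (2 * k + 3) ≃ ZMod (2 * k + 3),
      arcSum (e 1) (e 2) (e 0) = arcSum (e 0) (e 1) (e 2) := fun e => by unfold arcSum; ring
    have hr' : ∀ e : Fin (2 * k + 3) ≃ ZMod (2 * k + 3),
      arcSum (e 2) (e 0) (e 1) = arcSum (e 0) (e 1) (e 2) := fun e => by unfold arcSum; ring
    simp only [hr, hr'] at h6 ⊢
    rw [h6]
    ring
  rw [← sum_mul, ← h1, hG] at hW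
  have hk' : (6 * k : ℚ) ≠ 0 := by positivity
  refine mul_left_cancel₀ hk' ?_
  linarith

/-! ### Evaluation of the summand -/

theorem cycSign_rot {k : ℕ} (e : Fin (2 * k + 3) ≃ ZMod (2 * k + 3)) :
    cycSign (2 * k + 3) ((rotPerm k).trans e) = cycSign (2 * k + 3) e := by
  rw [cycSign_eq ⟨k + 1, by ring⟩ (Equiv.injective _) 0,
    cycSign_eq ⟨k + 1, by ring⟩ e.injective 0]
  have := linSign_comp_perm (relPos 0 e) (rotPerm k)
  rw [sign_rotPerm, Units.val_one, one_mul] at this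
  exact this

theorem aTuple_rot {k : ℕ} (e : Fin (2 * k + 3) ≃ ZMod (2 * k + 3)) {i j : Fin 3}
    (hij : rotPerm k ⟨i, by omega⟩ = ⟨j, by omega⟩) :
    aTuple k ((rotPerm k).trans e) i = aTuple k e j := by
  ext l
  simp only [aTuple]
  split_ifs with h
  · rw [Equiv.trans_apply, hij]
  · rw [Equiv.trans_apply, rotPerm_of_le k (by simp only; omega)]

/-- The summand of the evaluation. The terms `i = 1, 2` reduce to `i = 0` by rotating the first three
labels, an even permutation. -/
theorem summand_eq {k : ℕ} (e : Fin (2 * k + 3) ≃ ZMod (2 * k + 3))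
    (h : Cyc3 (e 0) (e 1) (e 2)) :
    (cycSign (2 * k + 3) e : ℚ) * ∑ i : Fin 3, (cycSign (2 * k + 3) (aTuple k e i) : ℚ) =
      arcSum (e 0) (e 1) (e 2) := by
  have key : ∀ e : Fin (2 * k + 3) ≃ ZMod (2 * k + 3), Cyc3 (e 0) (e 1) (e 2) →
      (cycSign (2 * k + 3) e : ℚ) * cycSign (2 * k + 3) (aTuple k e 0) =
        altWeight (e 1) (e 2) := fun e h => by
    rw [altWeight, ← Int.cast_mul, cycSign_mul_aTuple e h]
    push_cast
    rfl
  have hone : (⟨1, by omega⟩ : Fin (2 * k + 3)) = 1 := Fin.ext (fin_val_one k).symm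
  have htwo : (⟨2, by omega⟩ : Fin (2 * k + 3)) = 2 := Fin.ext (fin_val_two k).symm
  have t0 : ∀ e : Fin (2 * k + 3) ≃ ZMod (2 * k + 3),
      aTuple k ((rotPerm k).trans e) 0 = aTuple k e 1 := fun e =>
    aTuple_rot e ((rotPerm_zero k).trans hone.symm)
  have t1 : aTuple k ((rotPerm k).trans e) 1 = aTuple k e 2 :=
    aTuple_rot e ((congrArg _ hone).trans ((rotPerm_one k).trans htwo.symm))
  set e' := (rotPerm k).trans e with he'
  have e0 : e' 0 = e 1 := congrArg e (rotPerm_zero k)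
  have e1 : e' 1 = e 2 := congrArg e (rotPerm_one k)
  have e2 : e' 2 = e 0 := congrArg e (rotPerm_two k)
  set e'' := (rotPerm k).trans e' with he''
  have f0 : e'' 0 = e 2 := (congrArg e' (rotPerm_zero k)).trans e1
  have f1 : e'' 1 = e 0 := (congrArg e' (rotPerm_one k)).trans e2
  have f2 : e'' 2 = e 1 := (congrArg e' (rotPerm_two k)).trans e0
  have k0 := key e h
  have k1 := key e' (by rw [e0, e1, e2]; exact h.rotate)
  have k2 := key e'' (by rw [f0, f1, f2]; exact h.rotate.rotate)
  rw [he', cycSign_rot, t0, ← he', e1, e2] at k1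
  rw [he'', cycSign_rot, t0, ← he'', he', cycSign_rot, ← he', t1, f1, f2] at k2
  rw [Fin.sum_univ_three, mul_add, mul_add, k0, k1, k2, arcSum]
  ring

end

open Classical in
/-- Evaluation of the fat graph cocycle on the fundamental cycle of the Stasheff
associahedron `A_{2k+3}`: summing
`sgn_c(a₁,a₂,a₃,b₁,…,b_{2k}) ⬝ Σ_{i=1}^{3} sgn_c(a_i,b₁,…,b_{2k})` over all
enumerations of `ℤ/(2k+3)` with `(a₁,a₂,a₃,b₁)` in cyclic order gives
`(2k+3)!/(2(2k+1))`. -/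
theorem witten_cycle_evaluation (k : ℕ) (hk : 1 ≤ k) :
    ∑ e : Fin (2 * k + 3) → ZMod (2 * k + 3),
        (if Function.Bijective e ∧ InCyclicOrder (2 * k + 3) ![e 0, e 1, e 2, e 3] then
          (cycSign (2 * k + 3) e : ℚ) *
            ∑ i : Fin 3, (cycSign (2 * k + 3) (aTuple k e i) : ℚ)
        else 0)
      = (Nat.factorial (2 * k + 3) : ℚ) / (2 * (2 * (k : ℚ) + 1)) := by
  have hfun : ∀ G : (Fin (2 * k + 3) → ZMod (2 * k + 3)) → ℚ,
      ∑ e, (if Function.Bijective e then G e else 0) =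
        ∑ e : Fin (2 * k + 3) ≃ ZMod (2 * k + 3), G e := fun G => by
    rw [← Finset.sum_filter]
    symm
    refine Finset.sum_bij (fun e _ => ⇑e)
      (fun e _ => Finset.mem_filter.2 ⟨Finset.mem_univ _, e.bijective⟩)
      (fun e _ e' _ h => DFunLike.coe_injective h) (fun f hf => ?_) (fun _ _ => rfl)
    exact ⟨Equiv.ofBijective f (Finset.mem_filter.1 hf).2, Finset.mem_univ _, rfl⟩
  have hS : ∀ e : Fin (2 * k + 3) ≃ ZMod (2 * k + 3),
      (if InCyclicOrder (2 * k + 3) ![e 0, e 1, e 2, e 3] then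
        (cycSign (2 * k + 3) e : ℚ) * ∑ i : Fin 3, (cycSign (2 * k + 3) (aTuple k e i) : ℚ)
        else 0) =
      if InCyclicOrder (2 * k + 3) ![e 0, e 1, e 2, e 3] then arcSum (e 0) (e 1) (e 2)
        else 0 := fun e => by
    split_ifs with h
    · exact summand_eq e ((inCyclicOrder_four _ _ _ _).1 h).1
    · rfl
  simp only [ite_and]
  rw [hfun, Finset.sum_congr rfl fun e _ => hS e, sum_four_eq k hk]
  have h2 := sum_altWeight_triple k
  have h3 := sum_altWeight_pair k
  rw [← h2] at h3
  rw [eq_div_iff (by positivity)]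
  have hk' : ((k : ℚ) + 1) ≠ 0 := by positivity
  refine mul_left_cancel₀ hk' ?_
  linarith
end

section
/- Let k ≥ 1 be an integer, let n = 2k + 2 or n = 2k + 3, and let T be a finite tree with n leaves in which every non-leaf vertex has degree at least 3. If v is a vertex of T of degree at least k + 3, then every connected component of T − v contains strictly fewer than n/2 of the leaves of T; in particular, T has no edge splitting the leaves exactly in half, and v is the center of mass of T. -/
/-!
Every neighbour `a` of `v` can be followed away from `v` along a path; in a finite acyclic graph
without vertices of degree 2 such a path stops only at a leaf, so the component of `a` in `T - v`
contains a leaf (`exists_leaf_reachable`). Distinct neighbours of `v` lie in distinct components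
(`eq_of_adj_of_reachable_induce`). Hence each component of `T - v` misses at least
`deg v - 1 ≥ k + 2` leaves (`leafCountInDeleted_add_degree_le`), leaving at most `n - k - 2 < n / 2`.

For an edge `u u'`, at least one of the two sides does not contain `v`. That side is connected in
`T - v`, hence is contained in one component of `T - v` (`leafCountIn_le_leafCountInDeleted`) and has
fewer than `n / 2` leaves.
-/

variable {V : Type*} [Fintype V] [DecidableEq V]

open Classical in
/-- The number of leaves of `G` (vertices of degree 1) lying in the
`H`-connected component of the vertex `u`. -/
noncomputable def leafCountIn (G : SimpleGraph V) [DecidableRel G.Adj]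
    (H : SimpleGraph V) (u : V) : ℕ :=
  (Finset.univ.filter fun w => G.degree w = 1 ∧ H.Reachable u w).card

/-- An edge `{u,v}` of a tree with `n` leaves is *balanced* if each of the two
components obtained by removing (the interior of) the edge contains exactly
`n/2` leaves. -/
def IsBalancedEdge (G : SimpleGraph V) [DecidableRel G.Adj] (n : ℕ) (u v : V) : Prop :=
  2 * leafCountIn G (G.deleteEdges {s(u, v)}) u = n ∧
    2 * leafCountIn G (G.deleteEdges {s(u, v)}) v = n

open Classical in
/-- The number of leaves of `G` lying in the connected component of `w` in the
graph `T − v` (the subgraph induced on the complement of `v`). -/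
noncomputable def leafCountInDeleted (G : SimpleGraph V) [DecidableRel G.Adj]
    (v : V) (w : ↥{x : V | x ≠ v}) : ℕ :=
  (Finset.univ.filter fun u : ↥{x : V | x ≠ v} =>
    G.degree u.val = 1 ∧ (G.induce {x : V | x ≠ v}).Reachable w u).card

/-- A vertex `v` of a tree with `n` leaves is *central* if no connected
component of `T − v` contains more than `n/2` leaves. -/
def IsCentral (G : SimpleGraph V) [DecidableRel G.Adj] (n : ℕ) (v : V) : Prop :=
  ∀ w : ↥{x : V | x ≠ v}, 2 * leafCountInDeleted G v w ≤ n

/-- A walk avoiding `v` witnesses reachability in `G - v`. -/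
lemma reachable_induce_of_notMem_support {V : Type*} {G : SimpleGraph V} {v a b : V}
    (p : G.Walk a b) (hp : v ∉ p.support) (ha : a ≠ v) (hb : b ≠ v) :
    (G.induce {x : V | x ≠ v}).Reachable ⟨a, ha⟩ ⟨b, hb⟩ :=
  ⟨p.induce {x : V | x ≠ v} fun _ hx h => hp (h ▸ hx)⟩

/-- In an acyclic graph, distinct neighbours of `v` lie in distinct components of `G - v`: otherwise
`v` and a path between them would close up to a cycle. -/
lemma eq_of_adj_of_reachable_induce {V : Type*} {G : SimpleGraph V} (hG : G.IsAcyclic)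
    {v : V} {a b : {x : V | x ≠ v}} (ha : G.Adj v a) (hb : G.Adj v b)
    (h : (G.induce {x : V | x ≠ v}).Reachable a b) : a = b := by
  obtain ⟨p, hp⟩ := h.exists_isPath
  have hq : (p.map (SimpleGraph.Embedding.induce {x : V | x ≠ v}).toHom).IsPath :=
    hp.map Subtype.val_injective
  have hv : v ∉ (p.map (SimpleGraph.Embedding.induce (G := G) {x : V | x ≠ v}).toHom).support := by
    rw [SimpleGraph.Walk.support_map]
    intro hm
    obtain ⟨x, -, hx⟩ := List.mem_map.mp hm
    exact x.2 hx
  have hc := hq.cons (h := ha) hv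
  have := hG.eq_snd_of_adj_start hc hb (SimpleGraph.Walk.end_mem_support _)
  exact Subtype.ext (this.trans (SimpleGraph.Walk.snd_cons _ _)).symm

/-- A path starting at `v` and continuing to a neighbour `a` extends, by acyclicity and the absence
of vertices of degree 2, until it reaches a leaf. -/
lemma exists_leaf_of_isPath {V : Type*} [Fintype V] {G : SimpleGraph V}
    [DecidableRel G.Adj] (hG : G.IsAcyclic) (hdeg : ∀ v, G.degree v ≠ 1 → 3 ≤ G.degree v)
    {v a : V} (h : G.Adj v a) (m : ℕ) : ∀ {x : V} (q : G.Walk a x),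
      (SimpleGraph.Walk.cons h q).IsPath → Fintype.card V ≤ q.length + m →
      ∃ (l : V) (r : G.Walk a l), G.degree l = 1 ∧ v ∉ r.support := by
  classical
  induction m with
  | zero =>
    intro x q hq hm
    have := hq.length_lt
    simp only [SimpleGraph.Walk.length_cons] at this
    omega
  | succ m ih =>
    intro x q hq hm
    by_cases hx : G.degree x = 1
    · exact ⟨x, q, hx, ((SimpleGraph.Walk.cons_isPath_iff h q).mp hq).2⟩
    · obtain ⟨y, hy, hne⟩ := Finset.exists_mem_ne
        (s := G.neighborFinset x) (by rw [G.card_neighborFinset_eq_degree]; have := hdeg x hx; omega)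
        (SimpleGraph.Walk.cons h q).penultimate
      rw [G.mem_neighborFinset] at hy
      have hns : y ∉ (SimpleGraph.Walk.cons h q).support :=
        fun hmem => hne (hG.eq_penultimate_of_adj_end hq hy hmem)
      refine ih (q.concat hy) ?_ ?_
      · exact hq.concat hns hy
      · rw [SimpleGraph.Walk.length_concat]; omega

lemma exists_leaf_reachable {V : Type*} [Fintype V] {G : SimpleGraph V}
    [DecidableRel G.Adj] (hG : G.IsAcyclic) (hdeg : ∀ v, G.degree v ≠ 1 → 3 ≤ G.degree v)
    {v : V} (a : {x : V | x ≠ v}) (h : G.Adj v a) :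
    ∃ l : {x : V | x ≠ v}, G.degree l.val = 1 ∧ (G.induce {x : V | x ≠ v}).Reachable a l := by
  obtain ⟨l, r, hl, hr⟩ := exists_leaf_of_isPath hG hdeg h (Fintype.card V)
    SimpleGraph.Walk.nil (by simpa using h.ne) (by simp)
  have hlv : l ≠ v := fun e => hr (e ▸ r.end_mem_support)
  exact ⟨⟨l, hlv⟩, hl, reachable_induce_of_notMem_support r hr a.2 hlv⟩

/-- Each component of `G - v` misses at least `deg v - 1` leaves, one for each neighbour of `v`
outside it. -/
lemma leafCountInDeleted_add_degree_le {V : Type*} [Fintype V] [DecidableEq V]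
    {G : SimpleGraph V} [DecidableRel G.Adj] (hG : G.IsAcyclic)
    (hdeg : ∀ v, G.degree v ≠ 1 → 3 ≤ G.degree v) (v : V) (w : ↥{x : V | x ≠ v}) :
    leafCountInDeleted G v w + G.degree v ≤
      (Finset.univ.filter fun v => G.degree v = 1).card + 1 := by
  classical
  set K := G.induce {x : V | x ≠ v}
  choose f hf1 hf2 using fun a : {x : V | x ≠ v} => exists_leaf_reachable hG hdeg (v := v) a
  set N : Finset {x : V | x ≠ v} := Finset.univ.filter fun a => G.Adj v a
  have hN : N.card = G.degree v := by
    rw [← G.card_neighborFinset_eq_degree, ← Finset.card_map (Function.Embedding.subtype _)]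
    congr 1
    ext x
    simp only [N, Finset.mem_map, Finset.mem_filter, Finset.mem_univ, true_and,
      G.mem_neighborFinset]
    exact ⟨fun ⟨a, ha, e⟩ => e ▸ ha, fun h => ⟨⟨x, h.ne'⟩, h, rfl⟩⟩
  set N₁ := N.filter fun a => K.Reachable w a
  set N₂ := N.filter fun a => ¬ K.Reachable w a
  have hN12 : N₁.card + N₂.card = N.card := Finset.card_filter_add_card_filter_not _
  have hN₁ : N₁.card ≤ 1 := by
    refine Finset.card_le_one.mpr fun a ha b hb => ?_
    simp only [N₁, N, Finset.mem_filter, Finset.mem_univ, true_and] at ha hb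
    exact eq_of_adj_of_reachable_induce hG ha.1 hb.1 (ha.2.symm.trans hb.2)
  set L : Finset {x : V | x ≠ v} := Finset.univ.filter fun a => G.degree a.val = 1
  have hL : L.card ≤ (Finset.univ.filter fun v => G.degree v = 1).card := by
    refine Finset.card_le_card_of_injOn Subtype.val ?_ Subtype.val_injective.injOn
    intro a ha
    simpa [L] using ha
  set L₁ := L.filter fun a => K.Reachable w a
  set L₂ := L.filter fun a => ¬ K.Reachable w a
  have hL12 : L₁.card + L₂.card = L.card := Finset.card_filter_add_card_filter_not _
  have hL₁ : leafCountInDeleted G v w = L₁.card := by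
    unfold leafCountInDeleted
    congr 1
    ext a
    simp [L₁, L, K]
  have hNL : N₂.card ≤ L₂.card := by
    refine Finset.card_le_card_of_injOn (fun a => if h : G.Adj v a then f a h else a) ?_ ?_
    · intro a ha
      simp only [N₂, N, Finset.coe_filter, Finset.mem_filter, Finset.mem_univ, true_and,
        Set.mem_ofPred_eq] at ha
      simp only [L₂, L, Finset.coe_filter, Finset.mem_filter, Finset.mem_univ, true_and,
        Set.mem_ofPred_eq, dif_pos ha.1]
      exact ⟨hf1 a ha.1, fun h => ha.2 (h.trans (hf2 a ha.1).symm)⟩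
    · intro a ha b hb hab
      simp only [N₂, N, Finset.coe_filter, Finset.mem_filter, Finset.mem_univ, true_and,
        Set.mem_ofPred_eq] at ha hb
      simp only [dif_pos ha.1, dif_pos hb.1] at hab
      exact eq_of_adj_of_reachable_induce hG ha.1 hb.1
        ((hf2 a ha.1).trans (hab ▸ (hf2 b hb.1).symm))
  omega

/-- A component of a subgraph `H` that does not contain `v` lies in a single component of
`G - v`. -/
lemma leafCountIn_le_leafCountInDeleted {V : Type*} [Fintype V] [DecidableEq V]
    {G : SimpleGraph V} [DecidableRel G.Adj] {H : SimpleGraph V} (hH : H ≤ G) {v x : V}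
    (hx : x ≠ v) (hv : ¬ H.Reachable x v) :
    leafCountIn G H x ≤ leafCountInDeleted G v ⟨x, hx⟩ := by
  classical
  unfold leafCountIn leafCountInDeleted
  rw [← Finset.card_map (Function.Embedding.subtype _)]
  refine Finset.card_le_card fun l hl => ?_
  simp only [Finset.mem_filter, Finset.mem_univ, true_and] at hl
  obtain ⟨hl1, ⟨p⟩⟩ := hl
  have hp : v ∉ (p.mapLe hH).support := by
    intro h
    rw [SimpleGraph.Walk.support_mapLe_eq_support] at h
    exact hv (p.takeUntil v h).reachable
  have hlv : l ≠ v := fun e => hp (e ▸ (p.mapLe hH).end_mem_support)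
  simp only [Finset.mem_map, Finset.mem_filter, Finset.mem_univ, true_and]
  exact ⟨⟨l, hlv⟩, ⟨hl1, reachable_induce_of_notMem_support _ hp hx hlv⟩, rfl⟩

/-- In a tree with `n = 2k+2` or `n = 2k+3` leaves in which every non-leaf
vertex has degree at least 3, a massive vertex `v` (one of degree at least
`k+3`) has the property that every connected component of `T − v` contains
strictly fewer than `n/2` of the leaves; in particular there is no balanced
edge, and `v` is the center of mass. -/
theorem massive_vertex_is_center_of_mass (G : SimpleGraph V) [DecidableRel G.Adj]
    (hT : G.IsTree) (k n : ℕ) (hk : 1 ≤ k)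
    (hn : n = 2 * k + 2 ∨ n = 2 * k + 3)
    (hleaves : (Finset.univ.filter fun v => G.degree v = 1).card = n)
    (hdeg : ∀ v, G.degree v ≠ 1 → 3 ≤ G.degree v)
    (v : V) (hv : k + 3 ≤ G.degree v) :
    (∀ w : ↥{x : V | x ≠ v}, 2 * leafCountInDeleted G v w < n)
    ∧ (∀ u u', G.Adj u u' → ¬ IsBalancedEdge G n u u')
    ∧ IsCentral G n v := by
  have key : ∀ w : ↥{x : V | x ≠ v}, 2 * leafCountInDeleted G v w < n := by
    intro w
    have := leafCountInDeleted_add_degree_le hT.isAcyclic hdeg v w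
    omega
  refine ⟨key, ?_, fun w => (key w).le⟩
  intro u u' huu' ⟨h1, h2⟩
  have hle : G.deleteEdges {s(u, u')} ≤ G := G.deleteEdges_le _
  have hbr : ¬ (G.deleteEdges {s(u, u')}).Reachable u u' :=
    SimpleGraph.isBridge_iff.mp
      (SimpleGraph.isAcyclic_iff_forall_isBridge.mp hT.isAcyclic huu')
  by_cases hu : (G.deleteEdges {s(u, u')}).Reachable u v
  · have hu' : ¬ (G.deleteEdges {s(u, u')}).Reachable u' v := fun h => hbr (hu.trans h.symm)
    have hne : u' ≠ v := fun e => hu' (e ▸ SimpleGraph.Reachable.refl _)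
    have := leafCountIn_le_leafCountInDeleted hle hne hu'
    have := key ⟨u', hne⟩
    omega
  · have hne : u ≠ v := fun e => hu (e ▸ SimpleGraph.Reachable.refl _)
    have := leafCountIn_le_leafCountInDeleted hle hne hu
    have := key ⟨u, hne⟩
    omega
end
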